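/- arXiv:1501.07613 — 3 statements merged into one kernel-verified Lean document; each statement's English description precedes it below -/
import Mathlib

section
/- Let π : A → B be a surjective *-homomorphism of C*-algebras with A σ-unital, and let m : B × B → B be a bounded bilinear map satisfying m(b₁b₂, b₃) = b₁·m(b₂, b₃) and m(b₁, b₂b₃) = m(b₁, b₂)·b₃ for all b₁, b₂, b₃ ∈ B (m is a quasi-centralizer of B). Then there exists a bounded bilinear map m̃ : A × A → A satisfying m̃(a₁a₂, a₃) = a₁·m̃(a₂, a₃) and m̃(a₁, a₂a₃) = m̃(a₁, a₂)·a₃ for all a₁, a₂, a₃ ∈ A, with π(m̃(a, a')) = m(π(a), π(a')) for all a, a' ∈ A, and ‖m̃‖ = ‖m‖. -/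
open Filter Topology

set_option linter.unusedSectionVars false
namespace QC

section basic
variable {A : Type*} [NonUnitalCStarAlgebra A] [PartialOrder A] [StarOrderedRing A]

lemma norm_le_of_neg_le_le {y z : A} (hy : 0 ≤ y) (hz : IsSelfAdjoint z) (h1 : -y ≤ z) (h2 : z ≤ y) :
    ‖z‖ ≤ ‖y‖ := by
  let _ := CStarAlgebra.spectralOrder (Unitization ℂ A)
  let _ := CStarAlgebra.spectralOrderedRing (Unitization ℂ A)
  have hys : IsSelfAdjoint y := hy.isSelfAdjoint
  have hY : (y : Unitization ℂ A) ≤ algebraMap ℝ _ ‖y‖ := by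
    have := IsSelfAdjoint.le_algebraMap_norm_self (a := (y : Unitization ℂ A)) (hys.inr ℂ)
    rwa [Unitization.norm_inr] at this
  have h2' : (z : Unitization ℂ A) ≤ y := (Unitization.inr_le_iff z y hz hys).2 h2
  have h1' : -(y : Unitization ℂ A) ≤ z := by
    have := (Unitization.inr_le_iff (-y) z hys.neg hz).2 h1
    rwa [Unitization.inr_neg] at this
  have hzs : IsSelfAdjoint (z : Unitization ℂ A) := hz.inr ℂ
  have := CStarAlgebra.norm_or_neg_norm_mem_spectrum (a := (z : Unitization ℂ A)) hzs
  rw [Unitization.norm_inr] at this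
  rcases this with h | h
  · exact (le_algebraMap_iff_spectrum_le hzs).1 (h2'.trans hY) _ h
  · have h3 : algebraMap ℝ (Unitization ℂ A) (-‖y‖) ≤ z := by
      rw [map_neg]; exact (neg_le_neg hY).trans h1'
    have := (algebraMap_le_iff_le_spectrum hzs).1 h3 _ h
    linarith

/-- approximate inverse -/
lemma exists_v (s : A) (hs : 0 ≤ s) : ∃ v : ℕ → A, (∀ n, IsSelfAdjoint (v n)) ∧
    (∀ n, s * v n = v n * s) ∧ (∀ n, ‖s * v n‖ ≤ 1) ∧ Tendsto (fun n => s * v n * s) atTop (𝓝 s) := by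
  have hsa : IsSelfAdjoint s := hs.isSelfAdjoint
  let f : ℕ → ℝ → ℝ := fun n t => t / (t ^ 2 + 1 / (n + 1 : ℝ))
  have hpos : ∀ (n : ℕ) (t : ℝ), 0 < t ^ 2 + 1 / (n + 1 : ℝ) := fun n t => by positivity
  have hc : ∀ n, Continuous (f n) := fun n =>
    continuous_id.div (by fun_prop) (fun t => (hpos n t).ne')
  have f0 : ∀ n, f n 0 = 0 := fun n => by simp [f]
  have hid : cfcₙ (fun t : ℝ => t) s = s := cfcₙ_id' ℝ s
  have hmul : ∀ n, s * cfcₙ (f n) s = cfcₙ (fun t => t * f n t) s := fun n => by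
    rw [cfcₙ_mul (fun t => t) (f n) s (by fun_prop) rfl (hc n).continuousOn (f0 n), hid]
  have hmul2 : ∀ n, s * cfcₙ (f n) s * s = cfcₙ (fun t => t * f n t * t) s := fun n => by
    rw [hmul, cfcₙ_mul (fun t => t * f n t) (fun t => t) s
      (continuous_id.mul (hc n)).continuousOn (by simp) (by fun_prop) rfl, hid]
  refine ⟨fun n => cfcₙ (f n) s, fun n => cfcₙ_predicate _ _, fun n => ?_, fun n => ?_, ?_⟩
  · exact (cfcₙ_commute_cfcₙ (fun t : ℝ => t) (f n) s |>.eq) |> fun h => by rwa [hid] at h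
  · rw [hmul]
    refine norm_cfcₙ_le fun t _ => ?_
    have := hpos n t
    have : t * f n t = t ^ 2 / (t ^ 2 + 1 / (n + 1 : ℝ)) := by simp only [f]; ring
    rw [this, Real.norm_of_nonneg (by positivity)]
    apply div_le_one_of_le₀ _ (hpos n t).le
    have : (0:ℝ) ≤ 1 / (n + 1 : ℝ) := by positivity
    linarith
  · rw [tendsto_iff_norm_sub_tendsto_zero]
    have hlim : Tendsto (fun n : ℕ => Real.sqrt (1 / (n + 1 : ℝ))) atTop (𝓝 0) := by
      have := (Real.continuous_sqrt.tendsto 0).comp (tendsto_one_div_add_atTop_nhds_zero_nat (𝕜 := ℝ))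
      simpa [Function.comp_def] using this
    refine squeeze_zero (fun _ => norm_nonneg _) (fun n => ?_) hlim
    have : s * cfcₙ (f n) s * s - s = cfcₙ (fun t => t * f n t * t - t) s := by
      rw [cfcₙ_sub (fun t => t * f n t * t) (fun t => t) s
        ((continuous_id.mul (hc n)).mul continuous_id).continuousOn (by simp) (by fun_prop) rfl,
        hid, hmul2]
    rw [this]
    refine norm_cfcₙ_le fun t _ => ?_
    set ε := (1 / (n + 1 : ℝ)) with hε
    have hε0 : 0 < ε := by positivity
    have hp := hpos n t
    rw [← hε] at hp
    have : t * f n t * t - t = -(t * ε / (t ^ 2 + ε)) := by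
      simp only [f, ← hε]; field_simp; ring
    rw [this, norm_neg, Real.norm_eq_abs, abs_div, abs_of_pos hp, div_le_iff₀ hp, abs_mul,
      abs_of_pos hε0]
    obtain ⟨r, hr, hr2⟩ : ∃ r : ℝ, 0 < r ∧ r ^ 2 = ε := ⟨√ε, by positivity, Real.sq_sqrt hε0.le⟩
    rw [← hr2, Real.sqrt_sq hr.le, ← sq_abs t]
    have := abs_nonneg t
    nlinarith [mul_nonneg hr.le (sq_nonneg (|t| - r)), mul_nonneg hr.le (sq_nonneg (|t|)),
      mul_nonneg hr.le (sq_nonneg r), mul_nonneg hr.le (mul_nonneg this hr.le)]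

lemma conj_le {p k : A} (hp : star p = p) (hk : IsSelfAdjoint k) (hk1 : ‖k‖ ≤ 1) :
    p * k * p ≤ p * p := by
  have := CStarAlgebra.star_right_conjugate_le_norm_smul (a := p) (b := k) hk
  have hpp := mul_star_self_nonneg p
  rw [hp] at this hpp
  refine this.trans ?_
  simpa using smul_le_smul_of_nonneg_right hk1 hpp

end basic

section lift
variable {A B : Type*} [NonUnitalCStarAlgebra A] [PartialOrder A] [StarOrderedRing A]
  [NonUnitalCStarAlgebra B] [PartialOrder B] [StarOrderedRing B]

lemma map_nonneg' (π : A →⋆ₙₐ[ℂ] B) {a : A} (ha : 0 ≤ a) : 0 ≤ π a := by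
  obtain ⟨c, rfl⟩ := CStarAlgebra.nonneg_iff_eq_star_mul_self.1 ha
  rw [map_mul, map_star]; exact star_mul_self_nonneg _

lemma continuous_hom (π : A →⋆ₙₐ[ℂ] B) : Continuous π :=
  AddMonoidHomClass.continuous_of_bound π 1 (fun x => by
    simpa using NonUnitalStarAlgHom.norm_apply_le π x)

lemma norm_sq_le_of_le {r s : A} (h : r * star r ≤ s * star s) (c : A) :
    ‖c * r‖ ≤ ‖c * s‖ := by
  have h1 : c * (r * star r) * star c ≤ c * (s * star s) * star c := star_right_conjugate_le_conjugate h c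
  have h2 := CStarAlgebra.norm_le_norm_of_nonneg_of_le
    (star_right_conjugate_nonneg (mul_star_self_nonneg r) c) h1
  have e : ∀ r : A, c * (r * star r) * star c = (c * r) * star (c * r) := fun r => by
    simp only [star_mul, mul_assoc]
  rw [e, e, CStarRing.norm_self_mul_star, CStarRing.norm_self_mul_star] at h2
  exact abs_le_of_sq_le_sq' (by nlinarith) (norm_nonneg _) |>.2

lemma exists_lift (π : A →⋆ₙₐ[ℂ] B) (hsurj : Function.Surjective π) (G : A) (hG : 0 ≤ G)
    (b : B) (hb : 0 ≤ b) (hbG : b ≤ π G * π G) : ∃ x : A, 0 ≤ x ∧ x ≤ G * G ∧ π x = b := by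
  have hπc := continuous_hom π
  have hGs : star G = G := hG.isSelfAdjoint
  obtain ⟨β, hβ⟩ := CStarAlgebra.nonneg_iff_eq_mul_star_self.1 hb
  obtain ⟨r, rfl⟩ := hsurj β
  have hGG : 0 ≤ G * G := by simpa [hGs] using mul_star_self_nonneg G
  -- correction term
  have hhs : IsSelfAdjoint (r * star r - G * G) :=
    (mul_star_self_nonneg r).isSelfAdjoint.sub hGG.isSelfAdjoint
  obtain ⟨c, hc0, hc1, hc2⟩ : ∃ c : A, 0 ≤ c ∧ r * star r ≤ G * G + c ∧ π c = 0 := by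
    refine ⟨(r * star r - G * G)⁺, CFC.posPart_nonneg _, ?_, ?_⟩
    · have := CFC.le_posPart hhs
      exact sub_le_iff_le_add'.1 this
    · have h0 : π (r * star r - G * G) ≤ 0 := by
        rw [map_sub, map_mul, map_mul, map_star, ← hβ]; exact sub_nonpos.2 hbG
      have hneg := (CFC.posPart_eq_zero_iff _ (hhs.map π)).2 h0
      rw [← hneg]
      refine (CFC.posPart_negPart_unique (a := π (r * star r - G * G))
        (b := π (r * star r - G * G)⁺) (c := π (r * star r - G * G)⁻) ?_ ?_
        (map_nonneg' π (CFC.posPart_nonneg _)) (map_nonneg' π (CFC.negPart_nonneg _))).1.symm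
      · rw [← map_sub, CFC.posPart_sub_negPart _ hhs]
      · rw [← map_mul, CFC.posPart_mul_negPart, map_zero]
  obtain ⟨s, hs0, hs⟩ : ∃ s : A, 0 ≤ s ∧ s * s = G * G + c :=
    ⟨CFC.sqrt (G * G + c), CFC.sqrt_nonneg _, CFC.sqrt_mul_sqrt_self _ (add_nonneg hGG hc0)⟩
  have hss : star s = s := hs0.isSelfAdjoint
  have hπs : π s = π G := by
    have h1 : π s * π s = π G * π G := by rw [← map_mul, hs, map_add, hc2, map_mul, add_zero]
    rw [← CFC.sqrt_unique h1 (map_nonneg' π hs0)]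
    exact CFC.sqrt_mul_self _ (map_nonneg' π hG)
  obtain ⟨v, hv, hvs, hvn, hvt⟩ := exists_v s hs0
  have hrs : r * star r ≤ s * star s := by rw [hss, hs]; exact hc1
  have hGs' : G * star G ≤ s * star s := by rw [hss, hs, hGs]; exact le_add_of_nonneg_right hc0
  -- Cauchy
  have key : ∀ f : A, IsSelfAdjoint f → ‖G * f * r‖ ≤ ‖s * f * s‖ := fun f hf => by
    calc ‖G * f * r‖ ≤ ‖G * f * s‖ := norm_sq_le_of_le hrs _
      _ = ‖s * f * G‖ := by rw [← norm_star]; simp [star_mul, hf.star_eq, hss, hGs, mul_assoc]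
      _ ≤ ‖s * f * s‖ := norm_sq_le_of_le hGs' _
  have hcau : CauchySeq (fun n => G * v n * r) := by
    rw [Metric.cauchySeq_iff]
    intro ε hε
    obtain ⟨N, hN⟩ := Metric.cauchySeq_iff.1 hvt.cauchySeq ε hε
    refine ⟨N, fun m hm n hn => lt_of_le_of_lt ?_ (hN m hm n hn)⟩
    rw [dist_eq_norm, dist_eq_norm]
    have := key (v m - v n) ((hv m).sub (hv n))
    simpa only [mul_sub, sub_mul] using this
  obtain ⟨u, hu⟩ := cauchySeq_tendsto_of_complete hcau
  refine ⟨u * star u, mul_star_self_nonneg u, ?_, ?_⟩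
  · have hlim : Tendsto (fun n => (G * v n * r) * star (G * v n * r)) atTop (𝓝 (u * star u)) :=
      hu.mul (hu.star)
    refine le_of_tendsto' hlim fun n => ?_
    have hvs' := (hv n).star_eq
    have e1 : (G * v n * r) * star (G * v n * r) = (G * v n) * (r * star r) * star (G * v n) := by
      simp only [star_mul, mul_assoc]
    rw [e1]
    refine (star_right_conjugate_le_conjugate hrs _).trans ?_
    have e2 : (G * v n) * (s * star s) * star (G * v n) = G * ((s * v n) * star (s * v n)) * star G := by
      simp only [star_mul, hvs', hss, hGs]
      rw [hvs n, ]
      simp only [mul_assoc]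
      rw [← mul_assoc s (v n), hvs n, mul_assoc]
    rw [e2]
    refine (CStarAlgebra.star_right_conjugate_le_norm_smul (a := G)
      (b := (s * v n) * star (s * v n)) (mul_star_self_nonneg _).isSelfAdjoint).trans ?_
    rw [hGs, CStarRing.norm_self_mul_star]
    have : ‖s * v n‖ * ‖s * v n‖ ≤ 1 := mul_le_one₀ (hvn n) (norm_nonneg _) (hvn n)
    simpa using smul_le_smul_of_nonneg_right this hGG
  · rw [map_mul, map_star, hβ]
    suffices h : π u = π r by rw [h]
    have hQs : star (π G) = π G := by rw [← map_star, hGs]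
    have h1 : Tendsto (fun n => π G * π (v n) * π r) atTop (𝓝 (π u)) := by
      have := (hπc.tendsto u).comp hu
      simpa [Function.comp_def] using this
    have h2 : Tendsto (fun n => π G * π (v n) * π G) atTop (𝓝 (π G)) := by
      have := (hπc.tendsto s).comp hvt
      simpa [Function.comp_def, hπs] using this
    have hcomm : ∀ n, π G * π (v n) = π (v n) * π G := fun n => by
      rw [← hπs, ← map_mul, hvs, map_mul]
    have hGz : π G * (π u - π r) = 0 := by
      have h3 : Tendsto (fun n => π G * (π G * π (v n) * π r)) atTop (𝓝 (π G * π u)) :=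
        h1.const_mul _
      have h4 : Tendsto (fun n => (π G * π (v n) * π G) * π r) atTop (𝓝 (π G * π r)) :=
        h2.mul_const _
      have h5 : (fun n => π G * (π G * π (v n) * π r)) = (fun n => (π G * π (v n) * π G) * π r) := by
        ext n
        simp only [mul_assoc]
        rw [← mul_assoc (π (v n)) (π G), ← hcomm n, mul_assoc]
      rw [h5] at h3
      rw [mul_sub, tendsto_nhds_unique h3 h4, sub_self]
    have hrz : star (π r) * (π u - π r) = 0 := by
      have h6 : ‖star (π u - π r) * π r‖ ≤ ‖star (π u - π r) * π G‖ := by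
        apply norm_sq_le_of_le; rw [← hβ, hQs]; exact hbG
      have h7 : star (π u - π r) * π G = 0 := by
        have := congrArg star hGz; simpa [star_mul, hQs, -map_sub] using this
      rw [h7, norm_zero] at h6
      have h8 := norm_le_zero_iff.1 h6
      have := congrArg star h8
      simpa only [star_mul, star_star, star_zero] using this
    have huz : star (π u) * (π u - π r) = 0 := by
      have h3 : Tendsto (fun n => star (π G * π (v n) * π r) * (π u - π r)) atTop
          (𝓝 (star (π u) * (π u - π r))) := h1.star.mul_const _
      refine tendsto_nhds_unique h3 ?_
      have : (fun n => star (π G * π (v n) * π r) * (π u - π r)) = fun _ => 0 := by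
        ext n
        simp only [star_mul, hQs, mul_assoc, hGz, mul_zero]
      rw [this]; exact tendsto_const_nhds
    have : star (π u - π r) * (π u - π r) = 0 := by
      rw [star_sub, sub_mul, huz, hrz, sub_zero]
    exact sub_eq_zero.1 (CStarRing.star_mul_self_eq_zero_iff _ |>.1 this)


lemma exists_lift_sa (π : A →⋆ₙₐ[ℂ] B) (hsurj : Function.Surjective π) (G : A) (hG : 0 ≤ G)
    (b : B) (hb : -(π G * π G) ≤ b) (hbG : b ≤ π G * π G) :
    ∃ x : A, -(G * G) ≤ x ∧ x ≤ G * G ∧ π x = b := by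
  have h2 : (0:ℝ) ≤ 1 / 2 := by norm_num
  obtain ⟨x, hx0, hx1, hx2⟩ := exists_lift π hsurj G hG ((1 / 2 : ℝ) • (b + π G * π G))
    (smul_nonneg h2 (neg_le_iff_add_nonneg.1 hb)) (by
      have := smul_le_smul_of_nonneg_left (add_le_add_left hbG (π G * π G)) h2
      refine this.trans_eq ?_
      rw [← two_smul ℝ (π G * π G), smul_smul]; norm_num)
  refine ⟨x + x - G * G, ?_, ?_, ?_⟩
  · rw [sub_eq_add_neg]; exact le_add_of_nonneg_left (add_nonneg hx0 hx0)
  · rw [sub_le_iff_le_add]; exact add_le_add hx1 hx1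
  · rw [map_sub, map_add, hx2, map_mul, ← two_smul ℝ ((1 / 2 : ℝ) • _), smul_smul]
    norm_num

end lift

section matrix
variable {A B : Type*} [NonUnitalCStarAlgebra A] [PartialOrder A] [StarOrderedRing A]
  [NonUnitalCStarAlgebra B] [PartialOrder B] [StarOrderedRing B]

/-- two by two matrices -/
def mat (a b c d : A) : CStarMatrix (Fin 2) (Fin 2) A := CStarMatrix.ofMatrix !![a, b; c, d]

lemma mat_mul (a b c d a' b' c' d' : A) : mat a b c d * mat a' b' c' d' =
    mat (a * a' + b * c') (a * b' + b * d') (c * a' + d * c') (c * b' + d * d') := by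
  ext i j
  fin_cases i <;> fin_cases j <;> simp [mat, CStarMatrix.mul_apply]

lemma star_mat (a b c d : A) : star (mat a b c d) = mat (star a) (star c) (star b) (star d) := by
  ext i j
  fin_cases i <;> fin_cases j <;> simp [mat, CStarMatrix.star_apply]

/-- diagonal embedding -/
def diagHom : A × A →⋆ₙₐ[ℂ] CStarMatrix (Fin 2) (Fin 2) A where
  toFun p := mat p.1 0 0 p.2
  map_smul' r p := by ext i j; fin_cases i <;> fin_cases j <;> simp [mat]
  map_zero' := by ext i j; fin_cases i <;> fin_cases j <;> simp [mat]
  map_add' p q := by ext i j; fin_cases i <;> fin_cases j <;> simp [mat]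
  map_mul' p q := by rw [mat_mul]; simp
  map_star' p := by rw [star_mat]; simp

lemma norm_diag (a d : A) : ‖mat a 0 0 d‖ = max ‖a‖ ‖d‖ := by
  have := NonUnitalStarAlgHom.norm_map (diagHom (A := A)) (fun p q h => by
    have h1 : mat p.1 0 0 p.2 0 0 = mat q.1 0 0 q.2 0 0 := congrFun (congrFun h 0) 0
    have h2 : mat p.1 0 0 p.2 1 1 = mat q.1 0 0 q.2 1 1 := congrFun (congrFun h 1) 1
    exact Prod.ext h1 h2) (a, d)
  exact this

lemma norm_offdiag_le (k : B) (hk : ‖k‖ ≤ 1) : ‖mat 0 k (star k) 0‖ ≤ 1 := by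
  have h : ‖mat 0 k (star k) 0‖ * ‖mat 0 k (star k) 0‖ ≤ 1 := by
    rw [← CStarRing.norm_self_mul_star, star_mat, mat_mul]
    simp only [star_star, star_zero, zero_mul, mul_zero, zero_add, add_zero]
    rw [norm_diag, CStarRing.norm_self_mul_star, CStarRing.norm_star_mul_self]
    exact max_le (mul_le_one₀ hk (norm_nonneg _) hk) (mul_le_one₀ hk (norm_nonneg _) hk)
  nlinarith [norm_nonneg (mat 0 k (star k) 0)]

lemma exists_corner (π : A →⋆ₙₐ[ℂ] B) (hsurj : Function.Surjective π) (e : A) (he : 0 ≤ e)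
    (b : B) (k : ℕ → B) (hk : ∀ n, ‖k n‖ ≤ 1)
    (hb : Tendsto (fun n => π e * k n * π e) atTop (𝓝 b)) :
    ∃ x : A, π x = b ∧ ∀ a a' : A, ‖a * x * a'‖ ≤ ‖a * e‖ * ‖e * a'‖ := by
  have hes : star e = e := he.isSelfAdjoint
  have hps : star (π e) = π e := by rw [← map_star, hes]
  let Φ : CStarMatrix (Fin 2) (Fin 2) A →⋆ₙₐ[ℂ] CStarMatrix (Fin 2) (Fin 2) B :=
    CStarMatrix.mapₙₐ π
  have hΦ : ∀ (M : CStarMatrix (Fin 2) (Fin 2) A) i j, (Φ M) i j = π (M i j) := fun M i j => rfl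
  have hΦmat : ∀ a b c d : A, Φ (mat a b c d) = mat (π a) (π b) (π c) (π d) := fun a b c d => by
    ext i j; rw [hΦ]; fin_cases i <;> fin_cases j <;> rfl
  have hΦs : Function.Surjective Φ := fun M => by
    choose g hg using hsurj
    refine ⟨CStarMatrix.ofMatrix (fun i j => g (M i j)), ?_⟩
    ext i j; rw [hΦ]; exact hg _
  have hE : 0 ≤ mat e 0 0 e := by
    have := map_nonneg' (diagHom (A := A)) (a := (e, e)) ⟨he, he⟩
    exact this
  have hPs : star (mat (π e) 0 0 (π e)) = mat (π e) 0 0 (π e) := by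
    rw [star_mat, hps, star_zero]
  have hPP : 0 ≤ mat (π e) 0 0 (π e) * mat (π e) 0 0 (π e) := by
    have := mul_star_self_nonneg (mat (π e) 0 0 (π e))
    rwa [hPs] at this
  have hlim : Tendsto (fun n => mat (π e) 0 0 (π e) * mat 0 (k n) (star (k n)) 0 *
      mat (π e) 0 0 (π e)) atTop (𝓝 (mat 0 b (star b) 0)) := by
    have hc : Continuous (fun z : B => mat 0 z (star z) 0) := by
      refine continuous_pi fun i => continuous_pi fun j => ?_
      fin_cases i <;> fin_cases j
      · exact continuous_const
      · exact continuous_id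
      · exact continuous_star
      · exact continuous_const
    have := (hc.tendsto b).comp hb
    refine this.congr fun n => ?_
    simp only [Function.comp, mat_mul]
    simp [star_mul, hps, mul_assoc]
  have hksa : ∀ k : B, IsSelfAdjoint (mat 0 k (star k) 0) := fun k => by
    rw [IsSelfAdjoint, star_mat]; simp
  have hbd : ∀ k : B, ‖k‖ ≤ 1 → mat (π e) 0 0 (π e) * mat 0 k (star k) 0 *
      mat (π e) 0 0 (π e) ≤ mat (π e) 0 0 (π e) * mat (π e) 0 0 (π e) := fun k hk => by
    exact conj_le hPs (hksa k) (norm_offdiag_le k hk)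
  have hneg : ∀ k : B, mat 0 (-k) (star (-k)) 0 = - mat 0 k (star k) 0 := fun k => by
    ext i j; fin_cases i <;> fin_cases j <;> simp [mat]
  obtain ⟨X, hX1, hX2, hX3⟩ := exists_lift_sa Φ hΦs (mat e 0 0 e) hE (mat 0 b (star b) 0)
    (by
      rw [hΦmat, map_zero]
      refine ge_of_tendsto' hlim fun n => ?_
      have := hbd (-(k n)) (by rw [norm_neg]; exact hk n)
      rw [hneg, mul_neg, neg_mul] at this
      exact neg_le.1 this)
    (by
      rw [hΦmat, map_zero]
      exact le_of_tendsto' hlim fun n => hbd _ (hk n))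
  have hEE : 0 ≤ mat e 0 0 e * mat e 0 0 e := by
    have := mul_star_self_nonneg (mat e 0 0 e)
    rwa [star_mat, hes, star_zero] at this
  have hXs : IsSelfAdjoint X := by
    have h1 : 0 ≤ X + mat e 0 0 e * mat e 0 0 e := neg_le_iff_add_nonneg.1 hX1
    have := h1.isSelfAdjoint.sub hEE.isSelfAdjoint
    simpa using this
  refine ⟨X 0 1, ?_, ?_⟩
  · rw [← hΦ, hX3]; rfl
  have h1 : ∀ a a' : A, ‖a * e‖ ≤ 1 → ‖e * a'‖ ≤ 1 → ‖a * X 0 1 * a'‖ ≤ 1 := by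
    intro a a' ha ha'
    let C := mat a 0 0 (star a')
    have hC1 : -(C * (mat e 0 0 e * mat e 0 0 e) * star C) ≤ C * X * star C := by
      have := star_right_conjugate_le_conjugate hX1 C
      rwa [mul_neg, neg_mul] at this
    have hC2 := star_right_conjugate_le_conjugate hX2 C
    have h3 := norm_le_of_neg_le_le (star_right_conjugate_nonneg hEE C)
      (hXs.conjugate C) hC1 hC2
    have h4 : C * (mat e 0 0 e * mat e 0 0 e) * star C =
        mat ((a * e) * star (a * e)) 0 0 (star (e * a') * (e * a')) := by
      simp only [C, star_mat, mat_mul]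
      simp [star_mul, hes, mul_assoc]
    rw [h4, norm_diag, CStarRing.norm_self_mul_star, CStarRing.norm_star_mul_self] at h3
    have h5 : (C * X * star C) 0 1 = a * X 0 1 * a' := by
      simp [C, CStarMatrix.star_apply, CStarMatrix.mul_apply, mat]
    rw [← h5]
    refine (CStarMatrix.norm_entry_le_norm).trans (h3.trans ?_)
    exact max_le (mul_le_one₀ ha (norm_nonneg _) ha) (mul_le_one₀ ha' (norm_nonneg _) ha')
  intro a a'
  have h2 : ∀ α β : ℝ, ‖a * e‖ < α → ‖e * a'‖ < β → ‖a * X 0 1 * a'‖ ≤ α * β := by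
    intro α β hα hβ
    have hα0 : 0 < α := (norm_nonneg _).trans_lt hα
    have hβ0 : 0 < β := (norm_nonneg _).trans_lt hβ
    have := h1 ((α⁻¹ : ℝ) • a) ((β⁻¹ : ℝ) • a')
      (by rw [smul_mul_assoc, norm_smul, Real.norm_of_nonneg (by positivity),
            inv_mul_le_iff₀ hα0, mul_one]; exact hα.le)
      (by rw [mul_smul_comm, norm_smul, Real.norm_of_nonneg (by positivity),
            inv_mul_le_iff₀ hβ0, mul_one]; exact hβ.le)
    rw [smul_mul_assoc, smul_mul_assoc, mul_smul_comm, norm_smul, norm_smul,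
      Real.norm_of_nonneg (by positivity), Real.norm_of_nonneg (by positivity),
      inv_mul_le_iff₀ hα0, inv_mul_le_iff₀ hβ0] at this
    linarith
  have hl : Tendsto (fun t : ℝ => (‖a * e‖ + t) * (‖e * a'‖ + t)) (𝓝[>] 0)
      (𝓝 (‖a * e‖ * ‖e * a'‖)) := by
    have : Continuous (fun t : ℝ => (‖a * e‖ + t) * (‖e * a'‖ + t)) := by fun_prop
    have h := this.tendsto 0
    simp only [add_zero] at h
    exact h.mono_left nhdsWithin_le_nhds
  refine ge_of_tendsto hl ?_
  filter_upwards [self_mem_nhdsWithin] with t ht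
  have ht : 0 < t := ht
  exact h2 _ _ (by linarith) (by linarith)

end matrix

lemma tendsto_dense {E F : Type*} [SeminormedAddCommGroup E] [SeminormedAddCommGroup F] {ι : Type*}
    {l : Filter ι} (f : ι → E → F) (C : ℝ) (hf : ∀ i a b, ‖f i a - f i b‖ ≤ C * ‖a - b‖)
    {α : Type*} (φ : α → E) (hφ : DenseRange φ) (h : ∀ c, Tendsto (fun i => f i (φ c)) l (𝓝 0)) (a : E) :
    Tendsto (fun i => f i a) l (𝓝 0) := by
  rw [Metric.tendsto_nhds]
  intro ε hε
  have hC : 0 < |C| + 1 := by positivity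
  obtain ⟨c, hc⟩ := Metric.denseRange_iff.1 hφ a (ε / 2 / (|C| + 1)) (by positivity)
  have h1 := Metric.tendsto_nhds.1 (h c) (ε / 2) (by positivity)
  filter_upwards [h1] with i hi
  rw [dist_zero_right] at hi ⊢
  rw [dist_eq_norm, lt_div_iff₀ hC] at hc
  have h2 : ‖f i a‖ ≤ ‖f i a - f i (φ c)‖ + ‖f i (φ c)‖ := by
    simpa using norm_add_le (f i a - f i (φ c)) (f i (φ c))
  have h3 := hf i a (φ c)
  have h4 : C * ‖a - φ c‖ ≤ |C| * ‖a - φ c‖ :=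
    mul_le_mul_of_nonneg_right (le_abs_self C) (norm_nonneg _)
  nlinarith [norm_nonneg (a - φ c)]

lemma core {A B : Type*} [NonUnitalCStarAlgebra A] [NonUnitalCStarAlgebra B]
    (π : A →⋆ₙₐ[ℂ] B) (hsurj : Function.Surjective π)
    (hσ : ∃ e : A, (∃ f : A, e = star f * f) ∧ Dense (Set.range fun a : A => e * a))
    (m : B →L[ℂ] B →L[ℂ] B)
    (hm₁ : ∀ b₁ b₂ b₃ : B, m (b₁ * b₂) b₃ = b₁ * m b₂ b₃)
    (hm₂ : ∀ b₁ b₂ b₃ : B, m b₁ (b₂ * b₃) = m b₁ b₂ * b₃) :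
    ∃ w : ℕ → A, (∀ n, ‖w n‖ ≤ 1) ∧ (∀ a, Tendsto (fun n => w n * a) atTop (𝓝 a)) ∧
      (∀ a, Tendsto (fun n => a * w n) atTop (𝓝 a)) ∧ ((∀ b b', ‖m b b'‖ ≤ ‖b‖ * ‖b'‖) →
    ∃ m' : A →L[ℂ] A →L[ℂ] A,
      (∀ a₁ a₂ a₃ : A, m' (a₁ * a₂) a₃ = a₁ * m' a₂ a₃) ∧
      (∀ a₁ a₂ a₃ : A, m' a₁ (a₂ * a₃) = m' a₁ a₂ * a₃) ∧
      (∀ a a' : A, π (m' a a') = m (π a) (π a')) ∧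
      ∀ a a', ‖m' a a'‖ ≤ ‖a‖ * ‖a'‖) := by
  let _ := CStarAlgebra.spectralOrder A
  let _ := CStarAlgebra.spectralOrderedRing A
  let _ := CStarAlgebra.spectralOrder B
  let _ := CStarAlgebra.spectralOrderedRing B
  obtain ⟨e, ⟨f, hf⟩, hd⟩ := hσ
  have he : 0 ≤ e := by rw [hf]; exact star_mul_self_nonneg f
  have hes : star e = e := he.isSelfAdjoint
  have hdr : DenseRange (fun a : A => e * a) := hd
  have hdl : DenseRange (fun a : A => a * e) := by
    have h1 : DenseRange (star : A → A) := (star_involutive.surjective).denseRange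
    have h3 := h1.comp hdr continuous_star
    have : (star ∘ fun a : A => e * a) = (fun a : A => a * e) ∘ star := by
      ext a; simp [hes]
    rw [this] at h3
    exact h3.mono (Set.range_comp_subset_range _ _)
  obtain ⟨v, hv, hve, hvn, hvt⟩ := exists_v e he
  have hvn' : ∀ n, ‖v n * e‖ ≤ 1 := fun n => by rw [← hve]; exact hvn n
  have hπc := continuous_hom π
  have hwr : ∀ a, Tendsto (fun n => e * v n * a) atTop (𝓝 a) := fun a => by
    rw [← tendsto_sub_nhds_zero_iff]
    refine tendsto_dense (fun n a => e * v n * a - a) 2 (fun n a b => ?_) _ hdr (fun c => ?_) a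
    · have e1 : e * v n * a - a - (e * v n * b - b) = e * v n * (a - b) - (a - b) := by
        rw [mul_sub]; abel
      rw [e1]
      have := norm_sub_le (e * v n * (a - b)) (a - b)
      have h2 := norm_mul_le (e * v n) (a - b)
      nlinarith [hvn n, norm_nonneg (a - b)]
    · rw [tendsto_sub_nhds_zero_iff]
      simpa only [mul_assoc] using hvt.mul_const c
  have hwl : ∀ a, Tendsto (fun n => a * (v n * e)) atTop (𝓝 a) := fun a => by
    have := (hwr (star a)).star
    simpa only [star_mul, star_star, (hv _).star_eq, hes] using this
  refine ⟨fun n => e * v n, hvn, hwr, fun a => by simpa only [hve] using hwl a, fun hmb => ?_⟩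
  have hπn : ∀ a, ‖π a‖ ≤ ‖a‖ := fun a => NonUnitalStarAlgHom.norm_apply_le π a
  obtain ⟨x, hx, hxb⟩ := exists_corner π hsurj e he (m (π e) (π e))
    (fun n => m (π (v n * e)) (π (e * v n)))
    (fun n => (hmb _ _).trans (mul_le_one₀ ((hπn _).trans (hvn' n)) (norm_nonneg _)
      ((hπn _).trans (hvn n)))) (by
      have h1 : Tendsto (fun n => π (e * v n * e)) atTop (𝓝 (π e)) := (hπc.tendsto e).comp hvt
      have h2 : Continuous (fun p : B × B => m p.1 p.2) := by fun_prop
      have h3 := (h2.tendsto (π e, π e)).comp (h1.prodMk_nhds h1)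
      refine h3.congr fun n => ?_
      simp only [Function.comp]
      rw [← hm₁, ← hm₂, ← map_mul, ← map_mul, mul_assoc])
  -- approximants
  let T : ℕ → A := fun n => v n * x * v n
  have hT : ∀ n a a', ‖a * T n * a'‖ ≤ ‖a‖ * ‖a'‖ := fun n a a' => by
    have h1 := hxb (a * v n) (v n * a')
    have e1 : a * v n * x * (v n * a') = a * T n * a' := by simp only [T, mul_assoc]
    rw [e1] at h1
    refine h1.trans ?_
    have h2 : ‖a * v n * e‖ ≤ ‖a‖ := by
      rw [mul_assoc]
      exact (norm_mul_le _ _).trans (mul_le_of_le_one_right (norm_nonneg _) (hvn' n))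
    have h3 : ‖e * (v n * a')‖ ≤ ‖a'‖ := by
      rw [← mul_assoc]
      exact (norm_mul_le _ _).trans (mul_le_of_le_one_left (norm_nonneg _) (hvn n))
    exact mul_le_mul h2 h3 (norm_nonneg _) (norm_nonneg _)
  have hlim : ∀ c c', Tendsto (fun n => (c * e) * T n * (e * c')) atTop (𝓝 (c * x * c')) := by
    intro c c'
    rw [tendsto_iff_norm_sub_tendsto_zero]
    have h1 : Tendsto (fun n => ‖c * (e * v n * e) - c * e‖ * ‖e * c'‖ +
        ‖c * e‖ * ‖(e * v n * e) * c' - e * c'‖) atTop (𝓝 0) := by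
      have h2 := ((hvt.const_mul c).sub_const (c * e)).norm.mul_const ‖e * c'‖
      have h3 := ((hvt.mul_const c').sub_const (e * c')).norm.const_mul ‖c * e‖
      simpa using h2.add h3
    refine squeeze_zero (fun _ => norm_nonneg _) (fun n => ?_) h1
    have e1 : (c * e) * T n * (e * c') - c * x * c' =
        (c * e * v n - c) * x * (v n * e * c') + c * x * (v n * e * c' - c') := by
      simp only [T, sub_mul, mul_sub, mul_assoc]; abel
    rw [e1]
    refine (norm_add_le _ _).trans (add_le_add ((hxb _ _).trans ?_) ((hxb _ _).trans ?_))
    · refine mul_le_mul (le_of_eq ?_) ?_ (norm_nonneg _) (norm_nonneg _)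
      · simp only [sub_mul, mul_assoc]
      · have : e * (v n * e * c') = (e * v n) * (e * c') := by simp only [mul_assoc]
        rw [this]
        exact (norm_mul_le _ _).trans (mul_le_of_le_one_left (norm_nonneg _) (hvn n))
    · refine mul_le_mul_of_nonneg_left (le_of_eq ?_) (norm_nonneg _)
      simp only [mul_sub, mul_assoc]
  have hcau1 : ∀ a c', CauchySeq (fun n => a * T n * (e * c')) := fun a c' => by
    rw [cauchySeq_iff_tendsto_dist_atTop_0]
    have := tendsto_dense (l := (atTop : Filter (ℕ × ℕ)))
      (fun p a => a * T p.1 * (e * c') - a * T p.2 * (e * c')) (2 * ‖e * c'‖) (fun p a b => ?_)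
      _ hdl (fun c => ?_) a
    · simpa only [dist_eq_norm, norm_zero] using this.norm
    · have e1 : a * T p.1 * (e * c') - a * T p.2 * (e * c') -
        (b * T p.1 * (e * c') - b * T p.2 * (e * c')) =
        (a - b) * T p.1 * (e * c') - (a - b) * T p.2 * (e * c') := by
        simp only [sub_mul]; abel
      rw [e1]
      have := norm_sub_le ((a - b) * T p.1 * (e * c')) ((a - b) * T p.2 * (e * c'))
      linarith [hT p.1 (a - b) (e * c'), hT p.2 (a - b) (e * c')]
    · have := cauchySeq_iff_tendsto_dist_atTop_0.1 (hlim c c').cauchySeq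
      rw [tendsto_zero_iff_norm_tendsto_zero]
      simpa only [dist_eq_norm] using this
  have hcau : ∀ a a', CauchySeq (fun n => a * T n * a') := fun a a' => by
    rw [cauchySeq_iff_tendsto_dist_atTop_0]
    have := tendsto_dense (l := (atTop : Filter (ℕ × ℕ)))
      (fun p a' => a * T p.1 * a' - a * T p.2 * a') (2 * ‖a‖) (fun p b b' => ?_)
      _ hdr (fun c => ?_) a'
    · simpa only [dist_eq_norm, norm_zero] using this.norm
    · have e1 : a * T p.1 * b - a * T p.2 * b - (a * T p.1 * b' - a * T p.2 * b') =
        a * T p.1 * (b - b') - a * T p.2 * (b - b') := by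
        simp only [mul_sub]; abel
      rw [e1]
      have := norm_sub_le (a * T p.1 * (b - b')) (a * T p.2 * (b - b'))
      linarith [hT p.1 a (b - b'), hT p.2 a (b - b')]
    · have := cauchySeq_iff_tendsto_dist_atTop_0.1 (hcau1 a c)
      rw [tendsto_zero_iff_norm_tendsto_zero]
      simpa only [dist_eq_norm] using this
  choose g hg using fun a a' => cauchySeq_tendsto_of_complete (hcau a a')
  have hgu : ∀ {a a' z}, Tendsto (fun n => a * T n * a') atTop (𝓝 z) → g a a' = z :=
    fun h => tendsto_nhds_unique (hg _ _) h
  let L : A →ₗ[ℂ] A →ₗ[ℂ] A := LinearMap.mk₂ ℂ g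
    (fun a b c => hgu (by simpa only [add_mul] using (hg a c).add (hg b c)))
    (fun r a c => hgu (by simpa only [smul_mul_assoc] using (hg a c).const_smul r))
    (fun a b c => hgu (by simpa only [mul_add] using (hg a b).add (hg a c)))
    (fun r a c => hgu (by simpa only [mul_smul_comm] using (hg a c).const_smul r))
  have hLb : ∀ a a', ‖L a a'‖ ≤ 1 * ‖a‖ * ‖a'‖ := fun a a' => by
    rw [one_mul]
    exact le_of_tendsto' (hg a a').norm fun n => hT n a a'
  let m' := L.mkContinuous₂ 1 hLb
  have hm' : ∀ a a', m' a a' = g a a' := fun a a' => rfl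
  refine ⟨m', fun a b c => ?_, fun a b c => ?_, ?_, fun a a' => by
    have := hLb a a'
    rwa [one_mul] at this⟩
  · rw [hm', hm']
    exact hgu (by simpa only [mul_assoc] using (hg b c).const_mul a)
  · rw [hm', hm']
    exact hgu (by simpa only [mul_assoc] using (hg a b).mul_const c)
  · have h1 : ∀ c a', π (m' (c * e) a') = m (π (c * e)) (π a') := fun c a' => by
      have := hdr.equalizer (g := fun a' => π (m' (c * e) a'))
        (h := fun a' => m (π (c * e)) (π a')) (by fun_prop) (by fun_prop) (by
          ext c'
          simp only [Function.comp]
          rw [hm', hgu (hlim c c'), map_mul π, map_mul π, hx, map_mul π, map_mul π, hm₁, hm₂, mul_assoc])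
      exact congrFun this a'
    intro a a'
    have := hdl.equalizer (g := fun a => π (m' a a'))
        (h := fun a => m (π a) (π a')) (by fun_prop) (by fun_prop) (by
          ext c
          exact h1 c a')
    exact congrFun this a

end QC



theorem stmt12 {A B : Type*} [NonUnitalCStarAlgebra A] [NonUnitalCStarAlgebra B]
    -- `π : A → B` is a surjective ⋆-homomorphism
    (π : A →⋆ₙₐ[ℂ] B) (hsurj : Function.Surjective π)
    -- `A` is σ-unital
    (hσ : ∃ e : A, (∃ f : A, e = star f * f) ∧ Dense (Set.range fun a : A => e * a))
    -- `m` is a (bounded, bilinear) quasi-centralizer of `B`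
    (m : B →L[ℂ] B →L[ℂ] B)
    (hm₁ : ∀ b₁ b₂ b₃ : B, m (b₁ * b₂) b₃ = b₁ * m b₂ b₃)
    (hm₂ : ∀ b₁ b₂ b₃ : B, m b₁ (b₂ * b₃) = m b₁ b₂ * b₃) :
    ∃ m' : A →L[ℂ] A →L[ℂ] A,
      (∀ a₁ a₂ a₃ : A, m' (a₁ * a₂) a₃ = a₁ * m' a₂ a₃) ∧
      (∀ a₁ a₂ a₃ : A, m' a₁ (a₂ * a₃) = m' a₁ a₂ * a₃) ∧
      (∀ a a' : A, π (m' a a') = m (π a) (π a')) ∧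
      ‖m'‖ = ‖m‖ := by
  obtain ⟨w, hw1, hwr, hwl, -⟩ := QC.core π hsurj hσ m hm₁ hm₂
  rcases eq_or_ne m 0 with rfl | hm0
  · exact ⟨0, by simp, by simp, by simp, by rw [ContinuousLinearMap.opNorm_zero, ContinuousLinearMap.opNorm_zero]⟩
  have hmp : 0 < ‖m‖ := by
    refine lt_of_le_of_ne (ContinuousLinearMap.opNorm_nonneg m) fun h => hm0 ?_
    exact (ContinuousLinearMap.opNorm_zero_iff m).1 h.symm
  have hmc : ((‖m‖ : ℝ) : ℂ) ≠ 0 := by exact_mod_cast hmp.ne'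
  have hci : ‖((‖m‖ : ℝ) : ℂ)⁻¹‖ = ‖m‖⁻¹ := by
    rw [norm_inv, Complex.norm_real, Real.norm_of_nonneg hmp.le]
  have hcn : ‖((‖m‖ : ℝ) : ℂ)‖ = ‖m‖ := by
    rw [Complex.norm_real, Real.norm_of_nonneg hmp.le]
  generalize ((‖m‖ : ℝ) : ℂ) = r at hmc hci hcn
  obtain ⟨-, -, -, -, hcore⟩ := QC.core π hsurj hσ (r⁻¹ • m)
    (fun b₁ b₂ b₃ => by simp [hm₁, mul_smul_comm]) (fun b₁ b₂ b₃ => by simp [hm₂, smul_mul_assoc])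
  obtain ⟨m', h1, h2, h3, h4⟩ := hcore (fun b b' => by
    have hh : (r⁻¹ • m) b b' = r⁻¹ • m b b' := rfl
    rw [hh, norm_smul, hci, inv_mul_le_iff₀ hmp, ← mul_assoc]
    exact m.le_opNorm₂ b b')
  have hπ : ∀ a a' : A, π ((r • m') a a') = m (π a) (π a') := fun a a' => by
    have hh : (r • m') a a' = r • m' a a' := rfl
    have hh' : (r⁻¹ • m) (π a) (π a') = r⁻¹ • m (π a) (π a') := rfl
    rw [hh, map_smul π, h3, hh', smul_smul, mul_inv_cancel₀ hmc, one_smul]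
  refine ⟨r • m', fun a b c => by simp [h1, mul_smul_comm],
    fun a b c => by simp [h2, smul_mul_assoc], hπ, le_antisymm ?_ ?_⟩
  · refine (r • m').opNorm_le_bound₂ hmp.le fun a a' => ?_
    have hh : (r • m') a a' = r • m' a a' := rfl
    rw [hh, norm_smul, hcn, mul_assoc]
    exact mul_le_mul_of_nonneg_left (h4 a a') hmp.le
  · set M := r • m' with hM
    have hM0 : 0 ≤ ‖M‖ := ContinuousLinearMap.opNorm_nonneg M
    have hπc : Continuous π := AddMonoidHomClass.continuous_of_bound π 1 (fun x => by
      simpa using NonUnitalStarAlgHom.norm_apply_le π x)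
    refine m.opNorm_le_bound₂ hM0 fun b b' => ?_
    obtain ⟨a, rfl⟩ := hsurj b
    obtain ⟨a', rfl⟩ := hsurj b'
    have hc : Continuous (fun p : B × B => m p.1 p.2) := by fun_prop
    have hl := (hc.tendsto (π a, π a')).comp
      (((hπc.tendsto _).comp (hwl a)).prodMk_nhds ((hπc.tendsto _).comp (hwr a')))
    refine le_of_tendsto' hl.norm fun n => ?_
    simp only [Function.comp]
    rw [map_mul π, map_mul π, hm₁, hm₂, ← hπ]
    have hb : ‖π (M (w n) (w n))‖ ≤ ‖M‖ := by
      refine (NonUnitalStarAlgHom.norm_apply_le π _).trans ((M.le_opNorm₂ _ _).trans ?_)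
      have := mul_le_one₀ (hw1 n) (norm_nonneg _) (hw1 n)
      rw [mul_assoc]
      exact mul_le_of_le_one_right hM0 this
    calc ‖π a * (π (M (w n) (w n)) * π a')‖ ≤ ‖π a‖ * (‖π (M (w n) (w n))‖ * ‖π a'‖) :=
          (norm_mul_le _ _).trans (mul_le_mul_of_nonneg_left (norm_mul_le _ _) (norm_nonneg _))
      _ ≤ ‖π a‖ * (‖M‖ * ‖π a'‖) := by gcongr
      _ = ‖M‖ * ‖π a‖ * ‖π a'‖ := by ring
end

section
/- Let H be a complex Hilbert space and A ⊆ B(H) a nondegenerate C*-subalgebra. Suppose every left multiplier of A is a multiplier, i.e., every T ∈ B(H) with TA ⊆ A also satisfies AT ⊆ A. Then every quasi-multiplier of A is a multiplier: every T ∈ B(H) with aTa' ∈ A for all a, a' ∈ A satisfies TA ⊆ A and AT ⊆ A. -/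
open ContinuousLinearMap

variable {H : Type*} [NormedAddCommGroup H] [InnerProductSpace ℂ H] [CompleteSpace H]

theorem aux_right
    (A : NonUnitalStarSubalgebra ℂ (H →L[ℂ] H))
    (hAc : IsClosed (A : Set (H →L[ℂ] H)))
    (hLM : ∀ T : H →L[ℂ] H, (∀ a ∈ A, T * a ∈ A) → ∀ a ∈ A, a * T ∈ A)
    (T : H →L[ℂ] H) (hT : ∀ a ∈ A, ∀ a' ∈ A, a * T * a' ∈ A) :
    ∀ a ∈ A, a * T ∈ A := by
  intro a ha
  haveI : IsClosed (A : Set (H →L[ℂ] H)) := hAc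
  letI : NonUnitalCStarAlgebra A := inferInstance
  letI : PartialOrder A := CStarAlgebra.spectralOrder A
  haveI : StarOrderedRing A := CStarAlgebra.spectralOrderedRing A
  have h1 := (CStarAlgebra.increasingApproximateUnit A).tendsto_mul_right ⟨a, ha⟩
  have h2 : Filter.Tendsto (fun e : A => (e : H →L[ℂ] H) * (a * T))
      (CStarAlgebra.approximateUnit A) (nhds (a * T)) := by
    have h3 := ((continuous_subtype_val.tendsto _).comp h1).mul_const T
    simpa [Function.comp_def, mul_assoc] using h3
  refine hAc.mem_of_tendsto h2 (Filter.Eventually.of_forall fun e => ?_)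
  exact hLM (a * T) (fun a' ha' => hT a ha a' ha') e e.2

theorem stmt14
    (A : NonUnitalStarSubalgebra ℂ (H →L[ℂ] H))
    (hAc : IsClosed (A : Set (H →L[ℂ] H)))
    -- `A` is nondegenerate
    (hnd : Dense (Submodule.span ℂ {v : H | ∃ a ∈ A, ∃ ξ : H, a ξ = v} : Set H))
    -- every left multiplier of `A` is a multiplier
    (hLM : ∀ T : H →L[ℂ] H, (∀ a ∈ A, T * a ∈ A) → ∀ a ∈ A, a * T ∈ A) :
    -- every quasi-multiplier of `A` is a multiplier
    ∀ T : H →L[ℂ] H, (∀ a ∈ A, ∀ a' ∈ A, a * T * a' ∈ A) →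
      (∀ a ∈ A, T * a ∈ A) ∧ (∀ a ∈ A, a * T ∈ A) := by
  intro T hT
  refine ⟨fun a ha => ?_, aux_right A hAc hLM T hT⟩
  have h := aux_right A hAc hLM (star T) (fun b hb c hc => ?_) (star a) (star_mem ha)
  · simpa using star_mem h
  · have := star_mem (hT (star c) (star_mem hc) (star b) (star_mem hb))
    simpa [mul_assoc] using this
end

section
/- Let H be a complex Hilbert space with identity operator 1, and let A ⊆ B(H) be a nondegenerate C*-subalgebra. Suppose QM(A) ≠ LM(A) + RM(A), i.e., there exists an operator S ∈ B(H) with aSa' ∈ A for all a, a' ∈ A which cannot be written as S = T + T' with TA ⊆ A and AT' ⊆ A. Then there exists ε > 0 such that for every δ > 0 there is an operator h ∈ B(H) with a h a' ∈ A for all a, a' ∈ A (h is a quasi-multiplier of A) and (1 − δ)·1 ≤ h ≤ (1 + δ)·1, for which there is no T ∈ B(H) with TA ⊆ A, ‖T − 1‖ < ε, and T*T = h. -/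
open ContinuousLinearMap

variable {H : Type*} [NormedAddCommGroup H] [InnerProductSpace ℂ H] [CompleteSpace H]

/-- Left multipliers as a submodule. -/
def leftMult (A : NonUnitalStarSubalgebra ℂ (H →L[ℂ] H)) : Submodule ℂ (H →L[ℂ] H) where
  carrier := {T | ∀ a ∈ A, T * a ∈ A}
  add_mem' := by
    intro x y hx hy a ha
    rw [add_mul]
    exact add_mem (hx a ha) (hy a ha)
  zero_mem' := by
    intro a ha
    rw [zero_mul]
    exact zero_mem A
  smul_mem' := by
    intro c x hx a ha
    rw [smul_mul_assoc]
    exact SMulMemClass.smul_mem c (hx a ha)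

/-- Quasi-multipliers as a submodule. -/
def quasiMult (A : NonUnitalStarSubalgebra ℂ (H →L[ℂ] H)) : Submodule ℂ (H →L[ℂ] H) where
  carrier := {T | ∀ a ∈ A, ∀ a' ∈ A, a * T * a' ∈ A}
  add_mem' := by
    intro x y hx hy a ha b hb
    rw [mul_add, add_mul]
    exact add_mem (hx a ha b hb) (hy a ha b hb)
  zero_mem' := by
    intro a ha b hb
    rw [mul_zero, zero_mul]
    exact zero_mem A
  smul_mem' := by
    intro c x hx a ha b hb
    rw [mul_smul_comm, smul_mul_assoc]
    exact SMulMemClass.smul_mem c (hx a ha b hb)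

lemma leftMult_closed (A : NonUnitalStarSubalgebra ℂ (H →L[ℂ] H))
    (hAc : IsClosed (A : Set (H →L[ℂ] H))) : IsClosed (leftMult A : Set (H →L[ℂ] H)) := by
  have : (leftMult A : Set (H →L[ℂ] H)) =
      ⋂ a ∈ A, (fun T : H →L[ℂ] H => T * a) ⁻¹' (A : Set (H →L[ℂ] H)) := by
    ext T
    simp [leftMult]
  rw [this]
  exact isClosed_biInter fun a _ => hAc.preimage (continuous_id.mul continuous_const)

lemma leftMult_sub_quasi (A : NonUnitalStarSubalgebra ℂ (H →L[ℂ] H)) {L : H →L[ℂ] H}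
    (hL : L ∈ leftMult A) : L ∈ quasiMult A := by
  intro a ha b hb
  rw [mul_assoc]
  exact mul_mem ha (hL b hb)

lemma star_quasi (A : NonUnitalStarSubalgebra ℂ (H →L[ℂ] H)) {L : H →L[ℂ] H}
    (hL : L ∈ quasiMult A) : star L ∈ quasiMult A := by
  intro a ha b hb
  have := star_mem (hL _ (star_mem hb) _ (star_mem ha))
  simpa [mul_assoc] using this

lemma leftMult_inv (A : NonUnitalStarSubalgebra ℂ (H →L[ℂ] H))
    (hAc : IsClosed (A : Set (H →L[ℂ] H))) {T : H →L[ℂ] H} (hT : T ∈ leftMult A)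
    (h1 : ‖T - 1‖ < 1 / 3) :
    ∃ V ∈ leftMult A, T * V = 1 ∧ V * T = 1 ∧ ‖1 - V‖ ≤ 1 / 2 := by
  have hn : ‖1 - T‖ < 1 := by rw [norm_sub_rev]; linarith
  have h1m : (1 : H →L[ℂ] H) ∈ leftMult A := by intro a ha; simpa using ha
  have hmem : ∀ n : ℕ, (1 - T) ^ n ∈ leftMult A := by
    intro n
    induction n with
    | zero => simpa using h1m
    | succ n ih =>
      intro a ha
      rw [pow_succ, mul_assoc]
      exact ih _ ((sub_mem h1m hT) a ha)
  have hs := (summable_geometric_of_norm_lt_one hn)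
  have hVT := geom_series_mul_neg (1 - T) hn
  have hTV := mul_neg_geom_series (1 - T) hn
  rw [sub_sub_cancel] at hVT hTV
  refine ⟨∑' n : ℕ, (1 - T) ^ n, ?_, hTV, hVT, ?_⟩
  · exact (leftMult_closed A hAc).mem_of_tendsto hs.hasSum
      (Filter.Eventually.of_forall fun s => Submodule.sum_mem _ fun n _ => hmem n)
  · generalize (∑' n : ℕ, (1 - T) ^ n) = V at hTV
    have e : 1 - V = (T - 1) - (T - 1) * (1 - V) := by
      have : (T - 1) - (T - 1) * (1 - V) = T * V - V := by noncomm_ring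
      rw [this, hTV]
    have h2 : ‖1 - V‖ ≤ ‖T - 1‖ + ‖T - 1‖ * ‖1 - V‖ := by
      calc ‖1 - V‖ = ‖(T - 1) - (T - 1) * (1 - V)‖ := by rw [← e]
        _ ≤ _ := (norm_sub_le _ _).trans (by gcongr; exact norm_mul_le _ _)
    nlinarith [norm_nonneg (1 - V)]

lemma step (A : NonUnitalStarSubalgebra ℂ (H →L[ℂ] H))
    (hAc : IsClosed (A : Set (H →L[ℂ] H))) (δ : ℝ) (hδ : 0 < δ)
    (hyp : ∀ h ∈ quasiMult A, ((1 - δ : ℝ) : ℂ) • (1 : H →L[ℂ] H) ≤ h →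
        h ≤ ((1 + δ : ℝ) : ℂ) • (1 : H →L[ℂ] H) →
        ∃ T ∈ leftMult A, ‖T - 1‖ < 1 / 3 ∧ star T * T = h)
    (S : H →L[ℂ] H) (hS : S ∈ quasiMult A) (hsa : star S = S) (hn : ‖S‖ ≤ 1) :
    ∃ L ∈ leftMult A, ‖L‖ ≤ 1 / (2 * δ) ∧ ‖S - L - star L‖ ≤ 1 / 2 := by
  have h1m : (1 : H →L[ℂ] H) ∈ leftMult A := by intro a ha; simpa using ha
  have hsa' : IsSelfAdjoint S := hsa
  have hpos : ∀ R : H →L[ℂ] H, IsSelfAdjoint R → ‖R‖ ≤ 1 → 0 ≤ 1 + R := by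
    intro R hR hRn
    have h1 := hR.neg_algebraMap_norm_le_self
    have h2 : algebraMap ℝ (H →L[ℂ] H) ‖R‖ ≤ algebraMap ℝ (H →L[ℂ] H) 1 :=
      algebraMap_mono _ hRn
    rw [map_one] at h2
    have := (neg_le_neg h2).trans h1
    rwa [neg_le_iff_add_nonneg'] at this
  have hsm : ∀ R : H →L[ℂ] H, 0 ≤ R → 0 ≤ (δ : ℂ) • R := by
    intro R hR
    have h0 : 0 ≤ δ • R := smul_nonneg hδ.le hR
    rwa [Complex.coe_smul]
  obtain ⟨T, hT, hT1, hTS⟩ := hyp (1 + (δ : ℂ) • S)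
    (add_mem (leftMult_sub_quasi A h1m) (Submodule.smul_mem _ _ hS))
    (by
      rw [← sub_nonneg]
      convert hsm _ (hpos S hsa' hn) using 1
      push_cast
      module)
    (by
      rw [← sub_nonneg]
      convert hsm _ (hpos (-S) hsa'.neg (by simpa using hn)) using 1
      push_cast
      module)
  obtain ⟨V, hV, hTV, hVT, hVn⟩ := leftMult_inv A hAc hT hT1
  have hδc : (δ : ℂ) ≠ 0 := by exact_mod_cast hδ.ne'
  have key : S * V = (δ : ℂ)⁻¹ • (star T - V) := by
    have : (1 + (δ : ℂ) • S) * V = star T := by rw [← hTS, mul_assoc, hTV, mul_one]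
    rw [← this, add_mul, one_mul, add_sub_cancel_left, smul_mul_assoc, smul_smul,
      inv_mul_cancel₀ hδc, one_smul]
  have key2 : star V * S = (δ : ℂ)⁻¹ • (T - star V) := by
    have := congrArg star key
    simpa [star_smul, hsa] using this
  refine ⟨(2 * δ : ℂ)⁻¹ • (T - V), Submodule.smul_mem _ _ (sub_mem hT hV), ?_, ?_⟩
  · have h3 : ‖T - V‖ ≤ 1 := by
      calc ‖T - V‖ = ‖(T - 1) + (1 - V)‖ := by congr 1; abel
        _ ≤ ‖T - 1‖ + ‖1 - V‖ := norm_add_le _ _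
        _ ≤ 1 := by linarith
    rw [norm_smul]
    have : ‖(2 * δ : ℂ)⁻¹‖ = 1 / (2 * δ) := by
      simp [abs_of_pos hδ]
    rw [this]
    exact mul_le_of_le_one_right (by positivity) h3
  · have e : S - (2 * δ : ℂ)⁻¹ • (T - V) - star ((2 * δ : ℂ)⁻¹ • (T - V))
        = (2 : ℂ)⁻¹ • (S * (1 - V) + star (S * (1 - V))) := by
      have : star ((2 * δ : ℂ)⁻¹ • (T - V)) = (2 * δ : ℂ)⁻¹ • (star T - star V) := by
        simp [star_smul]
      rw [this, star_mul, star_sub, star_one, hsa, mul_sub, sub_mul, key, key2, mul_inv]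
      simp only [mul_one, one_mul]
      module
    rw [e, norm_smul]
    have h4 : ‖S * (1 - V)‖ ≤ 1 / 2 :=
      (norm_mul_le _ _).trans (by nlinarith [norm_nonneg S, norm_nonneg (1 - V)])
    have h5 := norm_add_le (S * (1 - V)) (star (S * (1 - V)))
    rw [norm_star] at h5
    have : ‖(2 : ℂ)⁻¹‖ = 1 / 2 := by simp
    rw [this]
    linarith

lemma step' (A : NonUnitalStarSubalgebra ℂ (H →L[ℂ] H)) (K : ℝ)
    (st : ∀ S ∈ quasiMult A, star S = S → ‖S‖ ≤ 1 →
      ∃ L ∈ leftMult A, ‖L‖ ≤ K ∧ ‖S - L - star L‖ ≤ 1 / 2)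
    (n : ℕ) (S : H →L[ℂ] H) (hS : S ∈ quasiMult A) (hsa : star S = S)
    (hn : ‖S‖ ≤ (1 / 2) ^ n) :
    ∃ L ∈ leftMult A, ‖L‖ ≤ K * (1 / 2) ^ n ∧ ‖S - L - star L‖ ≤ (1 / 2) ^ (n + 1) := by
  have n2 : ‖(2 : ℂ) ^ n‖ = 2 ^ n := by simp
  have n3 : ‖((2 : ℂ) ^ n)⁻¹‖ = (1 / 2) ^ n := by simp
  have c : (2 : ℝ) ^ n * (1 / 2) ^ n = 1 := by rw [← mul_pow]; norm_num
  obtain ⟨L, hL, h1, h2⟩ := st ((2 : ℂ) ^ n • S) (Submodule.smul_mem _ _ hS)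
    (by simp [star_smul, hsa])
    (by
      rw [norm_smul, n2, ← c]
      gcongr)
  refine ⟨((2 : ℂ) ^ n)⁻¹ • L, Submodule.smul_mem _ _ hL, ?_, ?_⟩
  · rw [norm_smul, n3, mul_comm]
    gcongr
  · have e : S - ((2 : ℂ) ^ n)⁻¹ • L - star (((2 : ℂ) ^ n)⁻¹ • L)
        = ((2 : ℂ) ^ n)⁻¹ • ((2 : ℂ) ^ n • S - L - star L) := by
      have : star (((2 : ℂ) ^ n)⁻¹ • L) = ((2 : ℂ) ^ n)⁻¹ • star L := by simp [star_smul]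
      rw [this, smul_sub, smul_sub, smul_smul, inv_mul_cancel₀ (pow_ne_zero n two_ne_zero), one_smul]
    rw [e, norm_smul, n3, pow_succ]
    gcongr

lemma decomp (A : NonUnitalStarSubalgebra ℂ (H →L[ℂ] H))
    (hAc : IsClosed (A : Set (H →L[ℂ] H))) (K : ℝ)
    (st : ∀ S ∈ quasiMult A, star S = S → ‖S‖ ≤ 1 →
      ∃ L ∈ leftMult A, ‖L‖ ≤ K ∧ ‖S - L - star L‖ ≤ 1 / 2)
    (S : H →L[ℂ] H) (hS : S ∈ quasiMult A) (hsa : star S = S) (hn : ‖S‖ ≤ 1) :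
    ∃ L ∈ leftMult A, S = L + star L := by
  have st' := step' A K st
  choose! g hg1 hg2 hg3 using st'
  let s : ℕ → (H →L[ℂ] H) := fun n => Nat.rec S (fun n R => R - g n R - star (g n R)) n
  have s0 : s 0 = S := rfl
  have ss : ∀ n, s (n + 1) = s n - g n (s n) - star (g n (s n)) := fun n => rfl
  have inv : ∀ n, s n ∈ quasiMult A ∧ star (s n) = s n ∧ ‖s n‖ ≤ (1 / 2) ^ n := by
    intro n
    induction n with
    | zero => exact ⟨hS, hsa, by simpa [s0] using hn⟩
    | succ n ih =>
      obtain ⟨a, b, c⟩ := ih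
      have hq := leftMult_sub_quasi A (hg1 n _ a b c)
      rw [ss]
      refine ⟨sub_mem (sub_mem a hq) (star_quasi A hq), ?_, hg3 n _ a b c⟩
      rw [star_sub, star_sub, star_star, b]
      abel
  have hsum : Summable fun n => g n (s n) := by
    refine Summable.of_norm_bounded (g := fun n : ℕ => K * (1 / 2 : ℝ) ^ n) ?_ ?_
    · exact (summable_geometric_of_lt_one (by norm_num) (by norm_num)).mul_left K
    · intro n
      obtain ⟨a, b, c⟩ := inv n
      exact hg2 n _ a b c
  have hL := hsum.hasSum
  refine ⟨∑' n, g n (s n), ?_, ?_⟩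
  · refine (leftMult_closed A hAc).mem_of_tendsto hL
      (Filter.Eventually.of_forall fun t => Submodule.sum_mem _ fun n _ => ?_)
    obtain ⟨a, b, c⟩ := inv n
    exact hg1 n _ a b c
  · have h1 := (hL.add hL.star).tendsto_sum_nat
    have h2 : Filter.Tendsto s Filter.atTop (nhds 0) := by
      refine squeeze_zero_norm (fun n => (inv n).2.2) ?_
      exact tendsto_pow_atTop_nhds_zero_of_lt_one (by norm_num) (by norm_num)
    have h3 := h1.add h2
    rw [add_zero] at h3
    refine tendsto_nhds_unique (Filter.Tendsto.congr ?_ tendsto_const_nhds) h3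
    intro n
    induction n with
    | zero => simp [s0]
    | succ n ih =>
      rw [ih, Finset.sum_range_succ, ss]
      abel

lemma decomp' (A : NonUnitalStarSubalgebra ℂ (H →L[ℂ] H))
    (hAc : IsClosed (A : Set (H →L[ℂ] H))) (K : ℝ)
    (st : ∀ S ∈ quasiMult A, star S = S → ‖S‖ ≤ 1 →
      ∃ L ∈ leftMult A, ‖L‖ ≤ K ∧ ‖S - L - star L‖ ≤ 1 / 2)
    (S : H →L[ℂ] H) (hS : S ∈ quasiMult A) (hsa : star S = S) :
    ∃ L ∈ leftMult A, S = L + star L := by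
  set r : ℝ := ‖S‖ + 1 with hr
  have hr0 : 0 < r := by positivity
  have hrc : (r : ℂ) ≠ 0 := by exact_mod_cast hr0.ne'
  obtain ⟨L, hL, h⟩ := decomp A hAc K st ((r : ℂ)⁻¹ • S) (Submodule.smul_mem _ _ hS)
    (by simp [star_smul, hsa])
    (by
      rw [norm_smul, norm_inv, Complex.norm_real, Real.norm_eq_abs, abs_of_pos hr0,
        inv_mul_le_iff₀ hr0]
      linarith)
  refine ⟨(r : ℂ) • L, Submodule.smul_mem _ _ hL, ?_⟩
  have : star ((r : ℂ) • L) = (r : ℂ) • star L := by simp [star_smul]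
  rw [this, ← smul_add, ← h, smul_smul, mul_inv_cancel₀ hrc, one_smul]

theorem stmt19
    (A : NonUnitalStarSubalgebra ℂ (H →L[ℂ] H))
    (hAc : IsClosed (A : Set (H →L[ℂ] H)))
    -- `A` is nondegenerate
    (hnd : Dense (Submodule.span ℂ {v : H | ∃ a ∈ A, ∃ ξ : H, a ξ = v} : Set H))
    -- `QM(A) ≠ LM(A) + RM(A)`
    (hQM : ∃ S : H →L[ℂ] H, (∀ a ∈ A, ∀ a' ∈ A, a * S * a' ∈ A) ∧
      ¬∃ T T' : H →L[ℂ] H, (∀ a ∈ A, T * a ∈ A) ∧ (∀ a ∈ A, a * T' ∈ A) ∧ S = T + T') :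
    ∃ ε : ℝ, 0 < ε ∧ ∀ δ : ℝ, 0 < δ →
      ∃ h : H →L[ℂ] H,
        (∀ a ∈ A, ∀ a' ∈ A, a * h * a' ∈ A) ∧
        ((1 - δ : ℝ) : ℂ) • (1 : H →L[ℂ] H) ≤ h ∧
        h ≤ ((1 + δ : ℝ) : ℂ) • (1 : H →L[ℂ] H) ∧
        ¬∃ T : H →L[ℂ] H, (∀ a ∈ A, T * a ∈ A) ∧ ‖T - 1‖ < ε ∧ star T * T = h := by
  obtain ⟨S, hS, hno⟩ := hQM
  refine ⟨1 / 3, by norm_num, fun δ hδ => ?_⟩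
  by_contra hcon
  apply hno
  have hyp : ∀ h ∈ quasiMult A, ((1 - δ : ℝ) : ℂ) • (1 : H →L[ℂ] H) ≤ h →
        h ≤ ((1 + δ : ℝ) : ℂ) • (1 : H →L[ℂ] H) →
        ∃ T ∈ leftMult A, ‖T - 1‖ < 1 / 3 ∧ star T * T = h := by
    intro h h1 h2 h3
    by_contra h4
    exact hcon ⟨h, h1, h2, h3, h4⟩
  have hd := decomp' A hAc _ (step A hAc δ hδ hyp)
  have hS' : S ∈ quasiMult A := hS
  have hSs := star_quasi A hS'
  obtain ⟨L, hL, e1⟩ := hd (S + star S) (add_mem hS' hSs) (by rw [star_add, star_star, add_comm])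
  obtain ⟨M, hM, e2⟩ := hd (Complex.I • (S - star S)) (Submodule.smul_mem _ _ (sub_mem hS' hSs))
    (by
      rw [star_smul, star_sub, star_star, ← neg_sub S, smul_neg]
      simp)
  have hR : ∀ L ∈ leftMult A, ∀ a ∈ A, a * star L ∈ A := by
    intro L hL a ha
    have := star_mem (hL _ (star_mem ha))
    simpa using this
  refine ⟨(2 : ℂ)⁻¹ • (L - Complex.I • M), (2 : ℂ)⁻¹ • (star L - Complex.I • star M),
    Submodule.smul_mem (leftMult A) _ (sub_mem hL (Submodule.smul_mem _ _ hM)), ?_, ?_⟩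
  · intro a ha
    rw [mul_smul_comm, mul_sub, mul_smul_comm]
    exact SMulMemClass.smul_mem _ (sub_mem (hR L hL a ha)
      (SMulMemClass.smul_mem _ (hR M hM a ha)))
  · have e3 : Complex.I • (M + star M) = -(S - star S) := by
      rw [← e2, smul_smul, Complex.I_mul_I, neg_one_smul]
    have : (2 : ℂ)⁻¹ • (L - Complex.I • M) + (2 : ℂ)⁻¹ • (star L - Complex.I • star M)
        = (2 : ℂ)⁻¹ • ((L + star L) - Complex.I • (M + star M)) := by module
    rw [this, e3, ← e1]
    module
end
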